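/- arXiv:0808.3549 — 8 statements merged into one kernel-verified Lean document; each statement's English description precedes it below -/
import Mathlib

section
/- Define in Λ₇ the classes L̂ = 8L − 3(E₁+⋯+E₇) and, for 1 ≤ i ≤ 7, Êᵢ = 3L − 2Eᵢ − Σ_{j≠i} Eⱼ. Then the ℤ-linear map ψ : Λ₇ → Λ₇ determined by ψ(L) = L̂ and ψ(Eᵢ) = Êᵢ is a group automorphism of Λ₇ which preserves the bilinear form (⟨ψ(x), ψ(y)⟩ = ⟨x, y⟩ for all x, y ∈ Λ₇) and satisfies ψ(K) = K; moreover its ℚ-linear extension to ℚ ⊗ Λ₇ sends ε₇ := (1/12)(6L − 2(E₁+E₂+E₃) − 3(E₄+E₅+E₆+E₇)) to −ε₇. -/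
namespace Stmt0

/-- The class `L` in `Λ₇ = ℤ⁸` (coordinate 0). -/
def L : Fin 8 → ℤ := fun j => if j = 0 then 1 else 0

/-- The classes `E₁,…,E₇` (indexed by `Fin 7`, so `E i` is `E_{i+1}`). -/
def E (i : Fin 7) : Fin 8 → ℤ := fun j => if j = i.succ then 1 else 0

/-- The intersection form on `Λ₇`. -/
def form (x y : Fin 8 → ℤ) : ℤ := x 0 * y 0 - ∑ i : Fin 7, x i.succ * y i.succ

/-- The canonical class `K = −3L + E₁ + ⋯ + E₇`. -/
def K : Fin 8 → ℤ := (-3 : ℤ) • L + ∑ i : Fin 7, E i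

/-- `L̂ = 8L − 3(E₁+⋯+E₇)`. -/
def Lhat : Fin 8 → ℤ := (8 : ℤ) • L - (3 : ℤ) • ∑ i : Fin 7, E i

/-- `Êᵢ = 3L − 2Eᵢ − Σ_{j≠i} Eⱼ = 3L − Eᵢ − Σⱼ Eⱼ`. -/
def Ehat (i : Fin 7) : Fin 8 → ℤ := (3 : ℤ) • L - E i - ∑ j : Fin 7, E j

/-- The ℤ-linear map determined by `ψ(L) = L̂`, `ψ(Eᵢ) = Êᵢ`. -/
def psi (x : Fin 8 → ℤ) : Fin 8 → ℤ := x 0 • Lhat + ∑ i : Fin 7, x i.succ • Ehat i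

/-- `L` viewed in `ℚ ⊗ Λ₇`. -/
def LQ : Fin 8 → ℚ := fun j => (L j : ℚ)

/-- `Eᵢ` viewed in `ℚ ⊗ Λ₇`. -/
def EQ (i : Fin 7) : Fin 8 → ℚ := fun j => (E i j : ℚ)

/-- `ε₇ = (1/12)(6L − 2(E₁+E₂+E₃) − 3(E₄+E₅+E₆+E₇))` in `ℚ ⊗ Λ₇`. -/
def eps7 : Fin 8 → ℚ :=
  (1 / 12 : ℚ) • ((6 : ℚ) • LQ - (2 : ℚ) • (EQ 0 + EQ 1 + EQ 2)
    - (3 : ℚ) • (EQ 3 + EQ 4 + EQ 5 + EQ 6))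

theorem form_add_left (x y z : Fin 8 → ℤ) : form (x + y) z = form x z + form y z := by
  simp only [form, Pi.add_apply, add_mul, Finset.sum_add_distrib]
  ring

theorem form_smul_left (c : ℤ) (x y : Fin 8 → ℤ) : form (c • x) y = c * form x y := by
  simp only [form, Pi.smul_apply, smul_eq_mul, mul_sub, Finset.mul_sum, mul_assoc]

theorem form_neg_left (x y : Fin 8 → ℤ) : form (-x) y = -form x y := by
  simpa using form_smul_left (-1) x y

theorem form_comm (x y : Fin 8 → ℤ) : form x y = form y x := by
  simp only [form, mul_comm]

theorem form_K_K : form K K = 2 := by decide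

theorem eq_smul_L_add_sum_smul_E (x : Fin 8 → ℤ) :
    x = x 0 • L + ∑ i : Fin 7, x i.succ • E i := by
  ext j
  refine Fin.cases ?_ (fun i => ?_) j
  · simp [L, E, Finset.sum_apply, (Fin.succ_ne_zero _).symm]
  · simp [L, E, Finset.sum_apply]

/-- `ψ` is the negative of the reflection in the class `K`, which has square `2`. -/
theorem psi_eq_neg_add_form_smul (x : Fin 8 → ℤ) : psi x = -x + form x K • K := by
  have hL : Lhat = -L - (3 : ℤ) • K := by decide
  have hE : ∀ i, Ehat i = -E i - K := by decide
  have hform : form x K = -3 * x 0 - ∑ i : Fin 7, x i.succ := by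
    have hK₀ : K 0 = -3 := by decide
    have hK : ∀ i : Fin 7, K i.succ = 1 := by decide
    simp only [form, hK₀, hK, mul_one, mul_comm (x 0)]
  have hx := eq_smul_L_add_sum_smul_E x
  calc psi x = -(x 0 • L + ∑ i : Fin 7, x i.succ • E i)
        + (-3 * x 0 - ∑ i : Fin 7, x i.succ) • K := by
        simp only [psi, hL, hE, smul_sub, smul_neg, Finset.sum_sub_distrib,
          Finset.sum_neg_distrib, ← Finset.sum_smul]
        module
    _ = -x + form x K • K := by rw [← hx, hform]

theorem form_psi_K (x : Fin 8 → ℤ) : form (psi x) K = form x K := by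
  rw [psi_eq_neg_add_form_smul, form_add_left, form_neg_left, form_smul_left, form_K_K]
  ring

theorem psi_involutive : Function.Involutive psi := by
  intro x
  rw [psi_eq_neg_add_form_smul (psi x), form_psi_K, psi_eq_neg_add_form_smul]
  abel

theorem psi_add (x y : Fin 8 → ℤ) : psi (x + y) = psi x + psi y := by
  simp only [psi_eq_neg_add_form_smul, form_add_left, add_smul]
  abel

theorem form_psi_psi (x y : Fin 8 → ℤ) : form (psi x) (psi y) = form x y := by
  rw [psi_eq_neg_add_form_smul x, form_add_left, form_neg_left, form_smul_left,
    form_comm K, form_psi_K, form_comm x (psi y), psi_eq_neg_add_form_smul y, form_add_left,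
    form_neg_left, form_smul_left, form_comm K x, form_comm y x]
  ring

/-- The integral class `12 ε₇`. -/
def twelveEps7 : Fin 8 → ℤ := ![6, -2, -2, -2, -3, -3, -3, -3]

theorem psi_twelveEps7 : psi twelveEps7 = -twelveEps7 := by
  have h : form twelveEps7 K = 0 := by decide
  simp [psi_eq_neg_add_form_smul, h]

theorem eps7_eq_smul : eps7 = (1 / 12 : ℚ) • fun j => (twelveEps7 j : ℚ) := by
  unfold eps7
  congr 1
  ext j
  fin_cases j <;> simp [LQ, EQ, L, E, twelveEps7, Fin.ext_iff]

theorem geiser_lattice_automorphism :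
    psi L = Lhat ∧ (∀ i : Fin 7, psi (E i) = Ehat i) ∧
    (∀ x y : Fin 8 → ℤ, psi (x + y) = psi x + psi y) ∧
    Function.Bijective psi ∧
    (∀ x y : Fin 8 → ℤ, form (psi x) (psi y) = form x y) ∧
    psi K = K ∧
    (∀ φ : (Fin 8 → ℚ) →ₗ[ℚ] (Fin 8 → ℚ),
      (∀ x : Fin 8 → ℤ, φ (fun j => (x j : ℚ)) = fun j => (psi x j : ℚ)) →
      φ eps7 = -eps7) := by
  refine ⟨by decide, by decide, psi_add, psi_involutive.bijective, form_psi_psi, by decide, ?_⟩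
  intro φ hφ
  rw [eps7_eq_smul, map_smul, hφ, psi_twelveEps7, ← smul_neg]
  ext j
  simp

end Stmt0
end

section
/- Define in Λ₈ the classes L̃ = 17L − 6(E₁+⋯+E₈) and, for 1 ≤ i ≤ 8, Ẽᵢ = 6L − 3Eᵢ − 2Σ_{j≠i} Eⱼ. Then the ℤ-linear map ψ : Λ₈ → Λ₈ determined by ψ(L) = L̃ and ψ(Eᵢ) = Ẽᵢ is a group automorphism of Λ₈ which preserves the bilinear form (⟨ψ(x), ψ(y)⟩ = ⟨x, y⟩ for all x, y ∈ Λ₈) and satisfies ψ(K) = K; moreover its ℚ-linear extension to ℚ ⊗ Λ₈ sends ε₈ := (1/30)(15L − 5(E₁+E₂+E₃) − 6(E₄+E₅+E₆+E₇+E₈)) to −ε₈. -/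
namespace Stmt1

/-- The class `L` in `Λ₈ = ℤ⁹` (coordinate 0). -/
def L : Fin 9 → ℤ := fun j => if j = 0 then 1 else 0

/-- The classes `E₁,…,E₈` (indexed by `Fin 8`, so `E i` is `E_{i+1}`). -/
def E (i : Fin 8) : Fin 9 → ℤ := fun j => if j = i.succ then 1 else 0

/-- The intersection form on `Λ₈`. -/
def form (x y : Fin 9 → ℤ) : ℤ := x 0 * y 0 - ∑ i : Fin 8, x i.succ * y i.succ

/-- The canonical class `K = −3L + E₁ + ⋯ + E₈`. -/
def K : Fin 9 → ℤ := (-3 : ℤ) • L + ∑ i : Fin 8, E i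

/-- `L̃ = 17L − 6(E₁+⋯+E₈)`. -/
def Ltil : Fin 9 → ℤ := (17 : ℤ) • L - (6 : ℤ) • ∑ i : Fin 8, E i

/-- `Ẽᵢ = 6L − 3Eᵢ − 2Σ_{j≠i} Eⱼ = 6L − Eᵢ − 2Σⱼ Eⱼ`. -/
def Etil (i : Fin 8) : Fin 9 → ℤ := (6 : ℤ) • L - E i - (2 : ℤ) • ∑ j : Fin 8, E j

/-- The ℤ-linear map determined by `ψ(L) = L̃`, `ψ(Eᵢ) = Ẽᵢ`. -/
def psi (x : Fin 9 → ℤ) : Fin 9 → ℤ := x 0 • Ltil + ∑ i : Fin 8, x i.succ • Etil i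

/-- `L` viewed in `ℚ ⊗ Λ₈`. -/
def LQ : Fin 9 → ℚ := fun j => (L j : ℚ)

/-- `Eᵢ` viewed in `ℚ ⊗ Λ₈`. -/
def EQ (i : Fin 8) : Fin 9 → ℚ := fun j => (E i j : ℚ)

/-- `ε₈ = (1/30)(15L − 5(E₁+E₂+E₃) − 6(E₄+E₅+E₆+E₇+E₈))` in `ℚ ⊗ Λ₈`. -/
def eps8 : Fin 9 → ℚ :=
  (1 / 30 : ℚ) • ((15 : ℚ) • LQ - (5 : ℚ) • (EQ 0 + EQ 1 + EQ 2)
    - (6 : ℚ) • (EQ 3 + EQ 4 + EQ 5 + EQ 6 + EQ 7))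

/-- `ψ` is the negative of the reflection in `K`, a class with `⟨K, K⟩ = 1`. -/
theorem psi_eq_form_K_smul_sub (x : Fin 9 → ℤ) : psi x = (2 * form x K) • K - x := by
  ext j
  fin_cases j <;>
    simp [psi, form, K, Ltil, Etil, L, E, Fin.sum_univ_succ] <;> ring

theorem form_K_K : form K K = 1 := by decide

theorem form_comm (x y : Fin 9 → ℤ) : form x y = form y x := by
  simp only [form, mul_comm]

theorem form_add_left (x y z : Fin 9 → ℤ) : form (x + y) z = form x z + form y z := by
  simp only [form, Pi.add_apply, add_mul, Finset.sum_add_distrib]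
  ring

theorem form_smul_sub_left (a : ℤ) (x y z : Fin 9 → ℤ) :
    form (a • x - y) z = a * form x z - form y z := by
  simp only [form, Pi.sub_apply, Pi.smul_apply, smul_eq_mul, sub_mul, mul_assoc,
    Finset.sum_sub_distrib, ← Finset.mul_sum]
  ring

theorem form_psi_K (x : Fin 9 → ℤ) : form (psi x) K = form x K := by
  rw [psi_eq_form_K_smul_sub, form_smul_sub_left, form_K_K]
  ring

theorem psi_involutive : Function.Involutive psi := by
  intro x
  rw [psi_eq_form_K_smul_sub (psi x), form_psi_K, psi_eq_form_K_smul_sub x, sub_sub_cancel]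

theorem form_psi_psi (x y : Fin 9 → ℤ) : form (psi x) (psi y) = form x y := by
  rw [psi_eq_form_K_smul_sub x, form_smul_sub_left, form_comm K, form_psi_K, form_comm x (psi y),
    psi_eq_form_K_smul_sub y, form_smul_sub_left, form_comm K x, form_comm y x]
  ring

theorem psi_eq_neg_of_form_K_eq_zero {x : Fin 9 → ℤ} (hx : form x K = 0) : psi x = -x := by
  simp [psi_eq_form_K_smul_sub, hx]

/-- The integral class `30 ε₈`. -/
def thirtyEps8 : Fin 9 → ℤ := ![15, -5, -5, -5, -6, -6, -6, -6, -6]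

theorem eps8_eq_smul_thirtyEps8 : eps8 = (1 / 30 : ℚ) • fun j => (thirtyEps8 j : ℚ) := by
  ext j
  fin_cases j <;> simp [eps8, thirtyEps8, LQ, EQ, L, E, Fin.ext_iff]

theorem form_thirtyEps8_K : form thirtyEps8 K = 0 := by decide

theorem bertini_lattice_automorphism :
    psi L = Ltil ∧ (∀ i : Fin 8, psi (E i) = Etil i) ∧
    (∀ x y : Fin 9 → ℤ, psi (x + y) = psi x + psi y) ∧
    Function.Bijective psi ∧
    (∀ x y : Fin 9 → ℤ, form (psi x) (psi y) = form x y) ∧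
    psi K = K ∧
    (∀ φ : (Fin 9 → ℚ) →ₗ[ℚ] (Fin 9 → ℚ),
      (∀ x : Fin 9 → ℤ, φ (fun j => (x j : ℚ)) = fun j => (psi x j : ℚ)) →
      φ eps8 = -eps8) := by
  refine ⟨?_, fun i => ?_, fun x y => ?_, psi_involutive.bijective, form_psi_psi, ?_,
    fun φ hφ => ?_⟩
  · decide
  · revert i
    decide
  · simp only [psi_eq_form_K_smul_sub, form_add_left, mul_add, add_smul]
    abel
  · decide
  · rw [eps8_eq_smul_thirtyEps8, map_smul, hφ, psi_eq_neg_of_form_K_eq_zero form_thirtyEps8_K,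
      ← smul_neg]
    simp only [Pi.neg_apply, Int.cast_neg]
    rfl

end Stmt1
end

section
/- Let k ∈ {7, 8} and let λ be a real number with 0 < λ ≤ 1. In ℝ ⊗ Λ_k set T_λ = 3L − (E₁+E₂+E₃) − λ(E₄+⋯+E_k). Then ⟨T_λ, E_k⟩ = λ, and every A ∈ Λ_k with ⟨A,A⟩ = −1 and ⟨K,A⟩ = −1 satisfies ⟨T_λ, A⟩ ≥ λ. In other words, the minimum of ⟨T_λ, ·⟩ over the set of such classes A equals λ and is attained at the class E_k. -/
namespace Stmt4

/-! Λ₇ = ℤ⁸ -/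

/-- The class `L` in `Λ₇` (coordinate 0). -/
def L7 : Fin 8 → ℤ := fun j => if j = 0 then 1 else 0

/-- The classes `E₁,…,E₇` of `Λ₇` (indexed by `Fin 7`). -/
def E7 (i : Fin 7) : Fin 8 → ℤ := fun j => if j = i.succ then 1 else 0

/-- The intersection form on `Λ₇`. -/
def form7 (x y : Fin 8 → ℤ) : ℤ := x 0 * y 0 - ∑ i : Fin 7, x i.succ * y i.succ

/-- The canonical class of `Λ₇`. -/
def K7 : Fin 8 → ℤ := (-3 : ℤ) • L7 + ∑ i : Fin 7, E7 i

/-- `L` in `ℝ ⊗ Λ₇`. -/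
def LR7 : Fin 8 → ℝ := fun j => (L7 j : ℝ)

/-- `Eᵢ` in `ℝ ⊗ Λ₇`. -/
def ER7 (i : Fin 7) : Fin 8 → ℝ := fun j => (E7 i j : ℝ)

/-- The intersection form on `ℝ ⊗ Λ₇`. -/
def formR7 (x y : Fin 8 → ℝ) : ℝ := x 0 * y 0 - ∑ i : Fin 7, x i.succ * y i.succ

/-- `T_λ = 3L − (E₁+E₂+E₃) − λ(E₄+⋯+E₇)` in `ℝ ⊗ Λ₇`. -/
def T7 (lam : ℝ) : Fin 8 → ℝ :=
  (3 : ℝ) • LR7 - (ER7 0 + ER7 1 + ER7 2) - lam • (ER7 3 + ER7 4 + ER7 5 + ER7 6)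

/-! Λ₈ = ℤ⁹ -/

/-- The class `L` in `Λ₈` (coordinate 0). -/
def L8 : Fin 9 → ℤ := fun j => if j = 0 then 1 else 0

/-- The classes `E₁,…,E₈` of `Λ₈` (indexed by `Fin 8`). -/
def E8 (i : Fin 8) : Fin 9 → ℤ := fun j => if j = i.succ then 1 else 0

/-- The intersection form on `Λ₈`. -/
def form8 (x y : Fin 9 → ℤ) : ℤ := x 0 * y 0 - ∑ i : Fin 8, x i.succ * y i.succ

/-- The canonical class of `Λ₈`. -/
def K8 : Fin 9 → ℤ := (-3 : ℤ) • L8 + ∑ i : Fin 8, E8 i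

/-- `L` in `ℝ ⊗ Λ₈`. -/
def LR8 : Fin 9 → ℝ := fun j => (L8 j : ℝ)

/-- `Eᵢ` in `ℝ ⊗ Λ₈`. -/
def ER8 (i : Fin 8) : Fin 9 → ℝ := fun j => (E8 i j : ℝ)

/-- The intersection form on `ℝ ⊗ Λ₈`. -/
def formR8 (x y : Fin 9 → ℝ) : ℝ := x 0 * y 0 - ∑ i : Fin 8, x i.succ * y i.succ

/-- `T_λ = 3L − (E₁+E₂+E₃) − λ(E₄+⋯+E₈)` in `ℝ ⊗ Λ₈`. -/
def T8 (lam : ℝ) : Fin 9 → ℝ :=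
  (3 : ℝ) • LR8 - (ER8 0 + ER8 1 + ER8 2)
    - lam • (ER8 3 + ER8 4 + ER8 5 + ER8 6 + ER8 7)

/-- A class `d L - ∑ mᵢ Eᵢ` of square `-1` and canonical degree `-1` in the eight-fold blow-up
has `m₄ + ⋯ + m₈ ≥ -1`. -/
theorem neg_one_le_sum_last_five (d a b c p q r s t : ℤ)
    (hsq : a ^ 2 + b ^ 2 + c ^ 2 + p ^ 2 + q ^ 2 + r ^ 2 + s ^ 2 + t ^ 2 = d ^ 2 + 1)
    (hsum : a + b + c + p + q + r + s + t = 3 * d - 1) :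
    -1 ≤ p + q + r + s + t := by
  have cauchy₃ : (a + b + c) ^ 2 ≤ 3 * (a ^ 2 + b ^ 2 + c ^ 2) := by
    linarith [sq_nonneg (a - b), sq_nonneg (a - c), sq_nonneg (b - c)]
  have cauchy₅ : (p + q + r + s + t) ^ 2 ≤ 5 * (p ^ 2 + q ^ 2 + r ^ 2 + s ^ 2 + t ^ 2) := by
    linarith [sq_nonneg (p - q), sq_nonneg (p - r), sq_nonneg (p - s), sq_nonneg (p - t),
      sq_nonneg (q - r), sq_nonneg (q - s), sq_nonneg (q - t), sq_nonneg (r - s),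
      sq_nonneg (r - t), sq_nonneg (s - t)]
  generalize hS : p + q + r + s + t = S at *
  have hP : a + b + c = 3 * d - 1 - S := by linarith
  rw [hP] at cauchy₃
  have key : 5 * (3 * d - 1 - S) ^ 2 + 3 * S ^ 2 ≤ 15 * (d ^ 2 + 1) := by linarith
  by_contra! hlt
  rcases (show S = -2 ∨ S ≤ -3 by omega) with rfl | h3
  · have : 0 ≤ d * (d + 1) := by
      rcases le_or_gt 0 d with h | h
      · positivity
      · exact mul_nonneg_of_nonpos_of_nonpos (by omega) (by omega)
    linarith
  · nlinarith [sq_nonneg (2 * d - S - 1), sq_nonneg (S + 3)]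

/-- For `k ∈ {7,8}` and `0 < λ ≤ 1`, the pairing `⟨T_λ, ·⟩` takes the value `λ`
on `E_k` and is `≥ λ` on every class `A` with `A·A = −1`, `K·A = −1`;
i.e. its minimum over such classes is `λ`, attained at `E_k`. -/
theorem Tlam_minimal_at_Ek (lam : ℝ) (h0 : 0 < lam) (h1 : lam ≤ 1) :
    (formR7 (T7 lam) (ER7 6) = lam ∧
      ∀ A : Fin 8 → ℤ, form7 A A = -1 → form7 K7 A = -1 →
        lam ≤ formR7 (T7 lam) (fun j => (A j : ℝ))) ∧
    (formR8 (T8 lam) (ER8 7) = lam ∧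
      ∀ A : Fin 9 → ℤ, form8 A A = -1 → form8 K8 A = -1 →
        lam ≤ formR8 (T8 lam) (fun j => (A j : ℝ))) := by
  refine ⟨⟨?_, ?_⟩, ?_, ?_⟩
  · simp [formR7, T7, LR7, ER7, L7, E7, Fin.sum_univ_seven, Fin.succ_ne_zero]
  · intro A hA hK
    simp [form7, K7, L7, E7, Fin.sum_univ_seven, Fin.succ_ne_zero] at hA hK
    have hS := neg_one_le_sum_last_five (A 0) (-A 1) (-A 2) (-A 3) (-A 4) (-A 5) (-A 6) (-A 7) 0
      (by linarith) (by linarith)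
    have hS' : (A 4 + A 5 + A 6 + A 7 : ℝ) ≤ 1 := by
      exact_mod_cast (by linarith : A 4 + A 5 + A 6 + A 7 ≤ 1)
    have hK' : (3 * A 0 + A 1 + A 2 + A 3 + A 4 + A 5 + A 6 + A 7 : ℝ) = 1 := by
      exact_mod_cast (by linarith)
    simp [formR7, T7, LR7, ER7, L7, E7, Fin.sum_univ_seven, Fin.succ_ne_zero]
    nlinarith [mul_nonneg (sub_nonneg.2 h1) (sub_nonneg.2 hS')]
  · simp [formR8, T8, LR8, ER8, L8, E8, Fin.sum_univ_eight, Fin.succ_ne_zero]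
  · intro A hA hK
    simp [form8, K8, L8, E8, Fin.sum_univ_eight, Fin.succ_ne_zero] at hA hK
    have hS := neg_one_le_sum_last_five (A 0) (-A 1) (-A 2) (-A 3) (-A 4) (-A 5) (-A 6) (-A 7) (-A 8)
      (by linarith) (by linarith)
    have hS' : (A 4 + A 5 + A 6 + A 7 + A 8 : ℝ) ≤ 1 := by
      exact_mod_cast (by linarith : A 4 + A 5 + A 6 + A 7 + A 8 ≤ 1)
    have hK' : (3 * A 0 + A 1 + A 2 + A 3 + A 4 + A 5 + A 6 + A 7 + A 8 : ℝ) = 1 := by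
      exact_mod_cast (by linarith)
    simp [formR8, T8, LR8, ER8, L8, E8, Fin.sum_univ_eight, Fin.succ_ne_zero]
    nlinarith [mul_nonneg (sub_nonneg.2 h1) (sub_nonneg.2 hS')]

end Stmt4
end

section
/- The ℤ-linear map α : Λ₇ → Λ₇ determined by α(L) = L′ and α(Eᵢ) = E′ᵢ is a group automorphism of Λ₇ which preserves the bilinear form (⟨α(x), α(y)⟩ = ⟨x, y⟩ for all x, y) and satisfies α(K) = K; moreover, in ℚ ⊗ Λ₇, (1/12)(6L′ − 2(E′₁+E′₂+E′₃) − 3(E′₄+E′₅+E′₆+E′₇)) = −ε₇, where ε₇ = (1/12)(6L − 2(E₁+E₂+E₃) − 3(E₄+E₅+E₆+E₇)). In particular α sends ε₇ to −ε₇. -/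
namespace Stmt5

/-- The class `L` in `Λ₇ = ℤ⁸` (coordinate 0). -/
def L : Fin 8 → ℤ := fun j => if j = 0 then 1 else 0

/-- The classes `E₁,…,E₇` (indexed by `Fin 7`, so `E i` is `E_{i+1}`). -/
def E (i : Fin 7) : Fin 8 → ℤ := fun j => if j = i.succ then 1 else 0

/-- The intersection form on `Λ₇`. -/
def form (x y : Fin 8 → ℤ) : ℤ := x 0 * y 0 - ∑ i : Fin 7, x i.succ * y i.succ

/-- The canonical class `K = −3L + E₁ + ⋯ + E₇`. -/
def K : Fin 8 → ℤ := (-3 : ℤ) • L + ∑ i : Fin 7, E i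

/-- `E₄+E₅+E₆+E₇`. -/
def S : Fin 8 → ℤ := E 3 + E 4 + E 5 + E 6

/-- `E₁+⋯+E₇`. -/
def T : Fin 8 → ℤ := ∑ j : Fin 7, E j

/-- `L′ = 7L − 2(E₁+E₂+E₃) − 3(E₄+E₅+E₆+E₇)`. -/
def L' : Fin 8 → ℤ := (7 : ℤ) • L - (2 : ℤ) • (E 0 + E 1 + E 2) - (3 : ℤ) • S

/-- The classes `E′₁,…,E′₇` of equation (4.1):
`E′₁ = 2L−E₃−(E₄+⋯+E₇)`, `E′₂ = 2L−E₂−(E₄+⋯+E₇)`, `E′₃ = 2L−E₁−(E₄+⋯+E₇)`,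
and `E′ᵢ = 3L−2Eⱼ−Σ_{m≠j}E_m = 3L−Eⱼ−(E₁+⋯+E₇)` for
`(i,j) = (4,7),(5,6),(6,5),(7,4)`. -/
def E' : Fin 7 → (Fin 8 → ℤ) :=
  ![(2 : ℤ) • L - E 2 - S,
    (2 : ℤ) • L - E 1 - S,
    (2 : ℤ) • L - E 0 - S,
    (3 : ℤ) • L - E 6 - T,
    (3 : ℤ) • L - E 5 - T,
    (3 : ℤ) • L - E 4 - T,
    (3 : ℤ) • L - E 3 - T]

/-- The ℤ-linear map determined by `α(L) = L′`, `α(Eᵢ) = E′ᵢ`. -/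
def alpha (x : Fin 8 → ℤ) : Fin 8 → ℤ := x 0 • L' + ∑ i : Fin 7, x i.succ • E' i

/-- `L` in `ℚ ⊗ Λ₇`. -/
def LQ : Fin 8 → ℚ := fun j => (L j : ℚ)

/-- `Eᵢ` in `ℚ ⊗ Λ₇`. -/
def EQ (i : Fin 7) : Fin 8 → ℚ := fun j => (E i j : ℚ)

/-- `L′` in `ℚ ⊗ Λ₇`. -/
def LQ' : Fin 8 → ℚ := fun j => (L' j : ℚ)

/-- `E′ᵢ` in `ℚ ⊗ Λ₇`. -/
def EQ' (i : Fin 7) : Fin 8 → ℚ := fun j => (E' i j : ℚ)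

/-- `ε₇ = (1/12)(6L − 2(E₁+E₂+E₃) − 3(E₄+E₅+E₆+E₇))`. -/
def eps7 : Fin 8 → ℚ :=
  (1 / 12 : ℚ) • ((6 : ℚ) • LQ - (2 : ℚ) • (EQ 0 + EQ 1 + EQ 2)
    - (3 : ℚ) • (EQ 3 + EQ 4 + EQ 5 + EQ 6))

/-- The coordinates of `alpha x`. -/
theorem alpha_eq (x : Fin 8 → ℤ) : alpha x =
    ![7 * x 0 + 2 * (x 1 + x 2 + x 3) + 3 * (x 4 + x 5 + x 6 + x 7),
      -2 * x 0 - x 3 - (x 4 + x 5 + x 6 + x 7),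
      -2 * x 0 - x 2 - (x 4 + x 5 + x 6 + x 7),
      -2 * x 0 - x 1 - (x 4 + x 5 + x 6 + x 7),
      -3 * x 0 - (x 1 + x 2 + x 3) - (x 4 + x 5 + x 6 + x 7) - x 7,
      -3 * x 0 - (x 1 + x 2 + x 3) - (x 4 + x 5 + x 6 + x 7) - x 6,
      -3 * x 0 - (x 1 + x 2 + x 3) - (x 4 + x 5 + x 6 + x 7) - x 5,
      -3 * x 0 - (x 1 + x 2 + x 3) - (x 4 + x 5 + x 6 + x 7) - x 4] := by
  ext j
  fin_cases j <;>
    simp [alpha, L', E', S, T, L, E, Fin.sum_univ_succ, Fin.ext_iff] <;> ring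

theorem alpha_add (x y : Fin 8 → ℤ) : alpha (x + y) = alpha x + alpha y := by
  simp only [alpha, Pi.add_apply, add_smul, Finset.sum_add_distrib]
  abel

theorem alpha_L : alpha L = L' := by
  simp [alpha, L]

theorem alpha_E (i : Fin 7) : alpha (E i) = E' i := by
  simp [alpha, E, (Fin.succ_ne_zero i).symm]

theorem alpha_involutive : Function.Involutive alpha := by
  intro x
  rw [alpha_eq (alpha x), alpha_eq x]
  ext j
  fin_cases j <;> simp <;> ring

theorem form_alpha (x y : Fin 8 → ℤ) : form (alpha x) (alpha y) = form x y := by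
  rw [alpha_eq, alpha_eq]
  simp [form, Fin.sum_univ_succ]
  ring

theorem alpha_K : alpha K = K := by
  rw [alpha_eq]
  decide

theorem eps7_primed_eq_neg :
    (1 / 12 : ℚ) • ((6 : ℚ) • LQ' - (2 : ℚ) • (EQ' 0 + EQ' 1 + EQ' 2)
      - (3 : ℚ) • (EQ' 3 + EQ' 4 + EQ' 5 + EQ' 6)) = -eps7 := by
  ext j
  fin_cases j <;>
    simp [eps7, LQ, EQ, LQ', EQ', L', E', S, T, L, E, Fin.sum_univ_succ, Fin.ext_iff] <;>
    norm_num

theorem alpha_automorphism_X7 :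
    alpha L = L' ∧ (∀ i : Fin 7, alpha (E i) = E' i) ∧
    (∀ x y : Fin 8 → ℤ, alpha (x + y) = alpha x + alpha y) ∧
    Function.Bijective alpha ∧
    (∀ x y : Fin 8 → ℤ, form (alpha x) (alpha y) = form x y) ∧
    alpha K = K ∧
    (1 / 12 : ℚ) • ((6 : ℚ) • LQ' - (2 : ℚ) • (EQ' 0 + EQ' 1 + EQ' 2)
      - (3 : ℚ) • (EQ' 3 + EQ' 4 + EQ' 5 + EQ' 6)) = -eps7 ∧
    (∀ φ : (Fin 8 → ℚ) →ₗ[ℚ] (Fin 8 → ℚ),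
      (∀ x : Fin 8 → ℤ, φ (fun j => (x j : ℚ)) = fun j => (alpha x j : ℚ)) →
      φ eps7 = -eps7) := by
  refine ⟨alpha_L, alpha_E, alpha_add, alpha_involutive.bijective, form_alpha, alpha_K,
    eps7_primed_eq_neg, fun φ hφ => ?_⟩
  have hL : φ LQ = LQ' :=
    (hφ L).trans (by rw [alpha_L]; rfl)
  have hE (i : Fin 7) : φ (EQ i) = EQ' i :=
    (hφ (E i)).trans (by rw [alpha_E]; rfl)
  rw [← eps7_primed_eq_neg, eps7]
  simp only [map_smul, map_sub, map_add, hL, hE]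

end Stmt5
end

section
/- The ℤ-linear map α : Λ₈ → Λ₈ determined by α(L) = L′ and α(Eᵢ) = E′ᵢ is a group automorphism of Λ₈ which preserves the bilinear form (⟨α(x), α(y)⟩ = ⟨x, y⟩ for all x, y) and satisfies α(K) = K; moreover, in ℚ ⊗ Λ₈, (1/30)(15L′ − 5(E′₁+E′₂+E′₃) − 6(E′₄+⋯+E′₈)) = −ε₈, where ε₈ = (1/30)(15L − 5(E₁+E₂+E₃) − 6(E₄+⋯+E₈)). In particular α sends ε₈ to −ε₈. -/
namespace Stmt7

/-- The class `L` in `Λ₈ = ℤ⁹` (coordinate 0). -/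
def L : Fin 9 → ℤ := fun j => if j = 0 then 1 else 0

/-- The classes `E₁,…,E₈` (indexed by `Fin 8`, so `E i` is `E_{i+1}`). -/
def E (i : Fin 8) : Fin 9 → ℤ := fun j => if j = i.succ then 1 else 0

/-- The intersection form on `Λ₈`. -/
def form (x y : Fin 9 → ℤ) : ℤ := x 0 * y 0 - ∑ i : Fin 8, x i.succ * y i.succ

/-- The canonical class `K = −3L + E₁ + ⋯ + E₈`. -/
def K : Fin 9 → ℤ := (-3 : ℤ) • L + ∑ i : Fin 8, E i

/-- `E₄+⋯+E₈`. -/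
def S : Fin 9 → ℤ := E 3 + E 4 + E 5 + E 6 + E 7

/-- `E₁+⋯+E₈`. -/
def T : Fin 9 → ℤ := ∑ j : Fin 8, E j

/-- `L′ = 16L − 5(E₁+E₂+E₃) − 6(E₄+⋯+E₈)`. -/
def L' : Fin 9 → ℤ := (16 : ℤ) • L - (5 : ℤ) • (E 0 + E 1 + E 2) - (6 : ℤ) • S

/-- The classes `E′₁,…,E′₈` of equation (4.2):
`E′₁ = 5L−E₁−E₂−2E₃−2(E₄+⋯+E₈)`, `E′₂ = 5L−E₁−E₃−2E₂−2(E₄+⋯+E₈)`,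
`E′₃ = 5L−E₂−E₃−2E₁−2(E₄+⋯+E₈)`, and for `4 ≤ i ≤ 8`, `j = 12−i`,
`E′ᵢ = 6L−3Eⱼ−2Σ_{m≠j}E_m = 6L−Eⱼ−2(E₁+⋯+E₈)`. -/
def E' : Fin 8 → (Fin 9 → ℤ) :=
  ![(5 : ℤ) • L - E 0 - E 1 - (2 : ℤ) • E 2 - (2 : ℤ) • S,
    (5 : ℤ) • L - E 0 - E 2 - (2 : ℤ) • E 1 - (2 : ℤ) • S,
    (5 : ℤ) • L - E 1 - E 2 - (2 : ℤ) • E 0 - (2 : ℤ) • S,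
    (6 : ℤ) • L - E 7 - (2 : ℤ) • T,
    (6 : ℤ) • L - E 6 - (2 : ℤ) • T,
    (6 : ℤ) • L - E 5 - (2 : ℤ) • T,
    (6 : ℤ) • L - E 4 - (2 : ℤ) • T,
    (6 : ℤ) • L - E 3 - (2 : ℤ) • T]

/-- The ℤ-linear map determined by `α(L) = L′`, `α(Eᵢ) = E′ᵢ`. -/
def alpha (x : Fin 9 → ℤ) : Fin 9 → ℤ := x 0 • L' + ∑ i : Fin 8, x i.succ • E' i

/-- `L` in `ℚ ⊗ Λ₈`. -/
def LQ : Fin 9 → ℚ := fun j => (L j : ℚ)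

/-- `Eᵢ` in `ℚ ⊗ Λ₈`. -/
def EQ (i : Fin 8) : Fin 9 → ℚ := fun j => (E i j : ℚ)

/-- `L′` in `ℚ ⊗ Λ₈`. -/
def LQ' : Fin 9 → ℚ := fun j => (L' j : ℚ)

/-- `E′ᵢ` in `ℚ ⊗ Λ₈`. -/
def EQ' (i : Fin 8) : Fin 9 → ℚ := fun j => (E' i j : ℚ)

/-- `ε₈ = (1/30)(15L − 5(E₁+E₂+E₃) − 6(E₄+⋯+E₈))`. -/
def eps8 : Fin 9 → ℚ :=
  (1 / 30 : ℚ) • ((15 : ℚ) • LQ - (5 : ℚ) • (EQ 0 + EQ 1 + EQ 2)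
    - (6 : ℚ) • (EQ 3 + EQ 4 + EQ 5 + EQ 6 + EQ 7))

/-- `alpha` in coordinates. -/
theorem alpha_eq (x : Fin 9 → ℤ) :
    alpha x =
      ![16 * x 0 + 5 * (x 1 + x 2 + x 3) + 6 * (x 4 + x 5 + x 6 + x 7 + x 8),
        -5 * x 0 - x 1 - x 2 - 2 * x 3 - 2 * (x 4 + x 5 + x 6 + x 7 + x 8),
        -5 * x 0 - x 1 - 2 * x 2 - x 3 - 2 * (x 4 + x 5 + x 6 + x 7 + x 8),
        -5 * x 0 - 2 * x 1 - x 2 - x 3 - 2 * (x 4 + x 5 + x 6 + x 7 + x 8),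
        -6 * x 0 - 2 * (x 1 + x 2 + x 3) - 2 * (x 4 + x 5 + x 6 + x 7 + x 8) - x 8,
        -6 * x 0 - 2 * (x 1 + x 2 + x 3) - 2 * (x 4 + x 5 + x 6 + x 7 + x 8) - x 7,
        -6 * x 0 - 2 * (x 1 + x 2 + x 3) - 2 * (x 4 + x 5 + x 6 + x 7 + x 8) - x 6,
        -6 * x 0 - 2 * (x 1 + x 2 + x 3) - 2 * (x 4 + x 5 + x 6 + x 7 + x 8) - x 5,
        -6 * x 0 - 2 * (x 1 + x 2 + x 3) - 2 * (x 4 + x 5 + x 6 + x 7 + x 8) - x 4] := by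
  have hL : L' = ![16, -5, -5, -5, -6, -6, -6, -6, -6] := by decide
  have hE : E' = ![![5, -1, -1, -2, -2, -2, -2, -2, -2], ![5, -1, -2, -1, -2, -2, -2, -2, -2],
      ![5, -2, -1, -1, -2, -2, -2, -2, -2], ![6, -2, -2, -2, -2, -2, -2, -2, -3],
      ![6, -2, -2, -2, -2, -2, -2, -3, -2], ![6, -2, -2, -2, -2, -2, -3, -2, -2],
      ![6, -2, -2, -2, -2, -3, -2, -2, -2], ![6, -2, -2, -2, -3, -2, -2, -2, -2]] := by
    decide
  ext j
  fin_cases j <;> simp [alpha, hL, hE, Fin.sum_univ_succ] <;> ring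

theorem alpha_add (x y : Fin 9 → ℤ) : alpha (x + y) = alpha x + alpha y := by
  simp only [alpha, Pi.add_apply, add_smul, Finset.sum_add_distrib]
  abel

theorem alpha_involutive : Function.Involutive alpha := by
  intro x
  rw [alpha_eq (alpha x), alpha_eq x]
  ext j
  fin_cases j <;> simp <;> ring

theorem form_alpha (x y : Fin 9 → ℤ) : form (alpha x) (alpha y) = form x y := by
  rw [alpha_eq, alpha_eq]
  simp [form, Fin.sum_univ_succ]
  ring

theorem alpha_L : alpha L = L' := by decide

theorem alpha_E (i : Fin 8) : alpha (E i) = E' i := by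
  revert i
  decide

theorem eps8_prime_eq_neg :
    (1 / 30 : ℚ) • ((15 : ℚ) • LQ' - (5 : ℚ) • (EQ' 0 + EQ' 1 + EQ' 2)
      - (6 : ℚ) • (EQ' 3 + EQ' 4 + EQ' 5 + EQ' 6 + EQ' 7)) = -eps8 := by
  have key : (15 : ℤ) • L' - (5 : ℤ) • (E' 0 + E' 1 + E' 2)
      - (6 : ℤ) • (E' 3 + E' 4 + E' 5 + E' 6 + E' 7) =
      -((15 : ℤ) • L - (5 : ℤ) • (E 0 + E 1 + E 2)
        - (6 : ℤ) • (E 3 + E 4 + E 5 + E 6 + E 7)) := by decide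
  ext j
  have hj := congrArg (Int.cast : ℤ → ℚ) (congrFun key j)
  simp only [Pi.sub_apply, Pi.smul_apply, Pi.add_apply, Pi.neg_apply, smul_eq_mul] at hj
  push_cast at hj
  simp only [eps8, LQ, EQ, LQ', EQ', Pi.sub_apply, Pi.smul_apply, Pi.add_apply, Pi.neg_apply,
    smul_eq_mul]
  rw [hj]
  ring

theorem map_eps8_eq_neg (φ : (Fin 9 → ℚ) →ₗ[ℚ] (Fin 9 → ℚ))
    (hφ : ∀ x : Fin 9 → ℤ, φ (fun j => (x j : ℚ)) = fun j => (alpha x j : ℚ)) :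
    φ eps8 = -eps8 := by
  have hL : φ LQ = LQ' := by
    unfold LQ LQ'
    rw [hφ, alpha_L]
  have hE (i : Fin 8) : φ (EQ i) = EQ' i := by
    unfold EQ EQ'
    rw [hφ, alpha_E]
  rw [← eps8_prime_eq_neg, eps8]
  simp only [map_smul, map_sub, map_add, hL, hE]

theorem alpha_automorphism_X8 :
    alpha L = L' ∧ (∀ i : Fin 8, alpha (E i) = E' i) ∧
    (∀ x y : Fin 9 → ℤ, alpha (x + y) = alpha x + alpha y) ∧
    Function.Bijective alpha ∧
    (∀ x y : Fin 9 → ℤ, form (alpha x) (alpha y) = form x y) ∧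
    alpha K = K ∧
    (1 / 30 : ℚ) • ((15 : ℚ) • LQ' - (5 : ℚ) • (EQ' 0 + EQ' 1 + EQ' 2)
      - (6 : ℚ) • (EQ' 3 + EQ' 4 + EQ' 5 + EQ' 6 + EQ' 7)) = -eps8 ∧
    (∀ φ : (Fin 9 → ℚ) →ₗ[ℚ] (Fin 9 → ℚ),
      (∀ x : Fin 9 → ℤ, φ (fun j => (x j : ℚ)) = fun j => (alpha x j : ℚ)) →
      φ eps8 = -eps8) := by
  exact ⟨alpha_L, alpha_E, alpha_add, alpha_involutive.bijective, form_alpha, by decide,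
    eps8_prime_eq_neg, map_eps8_eq_neg⟩

end Stmt7
end

section
/- The subgroup {A ∈ Λ₇ : ⟨A,B⟩ = 0 for every B ∈ {E₁−E₂, E₂−E₃, L−(E₁+E₂+E₃), E₄−E₅, E₅−E₆, E₆−E₇}} is exactly the subgroup of Λ₇ generated by the two elements 3L − (E₁+E₂+E₃) and E₄+E₅+E₆+E₇. -/
namespace Stmt9

/-- The class `L` in `Λ₇ = ℤ⁸` (coordinate 0). -/
def L : Fin 8 → ℤ := fun j => if j = 0 then 1 else 0

/-- The classes `E₁,…,E₇` (indexed by `Fin 7`, so `E i` is `E_{i+1}`). -/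
def E (i : Fin 7) : Fin 8 → ℤ := fun j => if j = i.succ then 1 else 0

/-- The intersection form on `Λ₇`. -/
def form (x y : Fin 8 → ℤ) : ℤ := x 0 * y 0 - ∑ i : Fin 7, x i.succ * y i.succ

theorem form_add_right (x y z : Fin 8 → ℤ) : form x (y + z) = form x y + form x z := by
  simp only [form, Pi.add_apply, mul_add, Finset.sum_add_distrib]
  ring

theorem form_sub_right (x y z : Fin 8 → ℤ) : form x (y - z) = form x y - form x z := by
  simp only [form, Pi.sub_apply, mul_sub, Finset.sum_sub_distrib]
  ring

theorem form_L_right (x : Fin 8 → ℤ) : form x L = x 0 := by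
  simp [form, L]

theorem form_E_right (x : Fin 8 → ℤ) (i : Fin 7) : form x (E i) = -x i.succ := by
  simp [form, E, (Fin.succ_ne_zero i).symm]

theorem orthogonal_complement_X7 :
    {A : Fin 8 → ℤ |
      ∀ B ∈ ({E 0 - E 1, E 1 - E 2, L - (E 0 + E 1 + E 2),
        E 3 - E 4, E 4 - E 5, E 5 - E 6} : Set (Fin 8 → ℤ)), form A B = 0} =
    ((AddSubgroup.closure
        {(3 : ℤ) • L - (E 0 + E 1 + E 2), E 3 + E 4 + E 5 + E 6} :
      AddSubgroup (Fin 8 → ℤ)) : Set (Fin 8 → ℤ)) := by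
  ext A
  simp only [Set.mem_ofPred_eq, Set.mem_insert_iff, Set.mem_singleton_iff, forall_eq_or_imp,
    forall_eq, SetLike.mem_coe, AddSubgroup.mem_closure_pair, form_sub_right, form_add_right,
    form_L_right, form_E_right, Fin.reduceSucc]
  constructor
  · rintro ⟨h₁₂, h₂₃, h₁₂₃, h₄₅, h₅₆, h₆₇⟩
    refine ⟨-A 1, A 4, ?_⟩
    ext j
    fin_cases j <;> simp [L, E] <;> lia
  · rintro ⟨m, n, rfl⟩
    simp [L, E]
    lia

end Stmt9
end

section
/- The subgroup {A ∈ Λ₈ : ⟨A,B⟩ = 0 for every B ∈ {E₁−E₂, E₂−E₃, L−(E₁+E₂+E₃), E₄−E₅, E₅−E₆, E₆−E₇, E₇−E₈}} is exactly the subgroup of Λ₈ generated by the two elements 3L − (E₁+E₂+E₃) and E₄+E₅+E₆+E₇+E₈. -/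
namespace Stmt10

/-- The class `L` in `Λ₈ = ℤ⁹` (coordinate 0). -/
def L : Fin 9 → ℤ := fun j => if j = 0 then 1 else 0

/-- The classes `E₁,…,E₈` (indexed by `Fin 8`, so `E i` is `E_{i+1}`). -/
def E (i : Fin 8) : Fin 9 → ℤ := fun j => if j = i.succ then 1 else 0

/-- The intersection form on `Λ₈`. -/
def form (x y : Fin 9 → ℤ) : ℤ := x 0 * y 0 - ∑ i : Fin 8, x i.succ * y i.succ

theorem form_add_right (x y z : Fin 9 → ℤ) : form x (y + z) = form x y + form x z := by
  simp only [form, Pi.add_apply, mul_add, Finset.sum_add_distrib]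
  ring

theorem form_sub_right (x y z : Fin 9 → ℤ) : form x (y - z) = form x y - form x z := by
  simp only [form, Pi.sub_apply, mul_sub, Finset.sum_sub_distrib]
  ring

theorem form_L_right (x : Fin 9 → ℤ) : form x L = x 0 := by
  simp [form, L]

theorem form_E_right (x : Fin 9 → ℤ) (i : Fin 8) : form x (E i) = -x i.succ := by
  simp [form, E, (Fin.succ_ne_zero i).symm]

theorem orthogonal_complement_X8 :
    {A : Fin 9 → ℤ |
      ∀ B ∈ ({E 0 - E 1, E 1 - E 2, L - (E 0 + E 1 + E 2),
        E 3 - E 4, E 4 - E 5, E 5 - E 6, E 6 - E 7} : Set (Fin 9 → ℤ)),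
        form A B = 0} =
    ((AddSubgroup.closure
        {(3 : ℤ) • L - (E 0 + E 1 + E 2), E 3 + E 4 + E 5 + E 6 + E 7} :
      AddSubgroup (Fin 9 → ℤ)) : Set (Fin 9 → ℤ)) := by
  ext A
  simp only [SetLike.mem_coe, AddSubgroup.mem_closure_pair, Set.mem_ofPred_eq,
    Set.mem_insert_iff, Set.mem_singleton_iff, forall_eq_or_imp, forall_eq,
    form_sub_right, form_add_right, form_L_right, form_E_right]
  constructor
  · rintro ⟨h₁, h₂, h₃, h₄, h₅, h₆, h₇⟩
    refine ⟨-A 1, A 4, ?_⟩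
    simp only [Fin.reduceSucc] at *
    ext j
    fin_cases j <;> simp [L, E, Fin.ext_iff] <;> lia
  · rintro ⟨m, n, rfl⟩
    simp [L, E, Fin.ext_iff]
    lia

end Stmt10
end

section
/- Define in Λ₅ the classes L̂ = 3L − (E₁+E₂+E₃+E₄) − 2E₅, Ê₁ = L − E₃ − E₅, Ê₂ = L − E₂ − E₅, Ê₃ = L − E₁ − E₅, Ê₄ = 2L − (E₁+E₂+E₃+E₄+E₅), and Ê₅ = L − E₄ − E₅. Then the ℤ-linear map ψ : Λ₅ → Λ₅ determined by ψ(L) = L̂ and ψ(Eᵢ) = Êᵢ is a group automorphism of Λ₅ which preserves the bilinear form and satisfies ψ(K) = K; moreover ψ(3L − (E₁+E₂+E₃) − 3E₄ − 3E₅) = −(3L − (E₁+E₂+E₃) − 3E₄ − 3E₅). -/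
namespace Stmt15

/-- The class `L` in `Λ₅ = ℤ⁶` (coordinate 0). -/
def L : Fin 6 → ℤ := fun j => if j = 0 then 1 else 0

/-- The classes `E₁,…,E₅` (indexed by `Fin 5`, so `E i` is `E_{i+1}`). -/
def E (i : Fin 5) : Fin 6 → ℤ := fun j => if j = i.succ then 1 else 0

/-- The intersection form on `Λ₅`. -/
def form (x y : Fin 6 → ℤ) : ℤ := x 0 * y 0 - ∑ i : Fin 5, x i.succ * y i.succ

/-- The canonical class `K = −3L + E₁ + ⋯ + E₅`. -/
def K : Fin 6 → ℤ := (-3 : ℤ) • L + ∑ i : Fin 5, E i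

/-- `L̂ = 3L − (E₁+E₂+E₃+E₄) − 2E₅`. -/
def Lhat : Fin 6 → ℤ := (3 : ℤ) • L - (E 0 + E 1 + E 2 + E 3) - (2 : ℤ) • E 4

/-- `Ê₁ = L−E₃−E₅`, `Ê₂ = L−E₂−E₅`, `Ê₃ = L−E₁−E₅`,
`Ê₄ = 2L−(E₁+E₂+E₃+E₄+E₅)`, `Ê₅ = L−E₄−E₅`. -/
def Ehat : Fin 5 → (Fin 6 → ℤ) :=
  ![L - E 2 - E 4,
    L - E 1 - E 4,
    L - E 0 - E 4,
    (2 : ℤ) • L - (E 0 + E 1 + E 2 + E 3 + E 4),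
    L - E 3 - E 4]

/-- The ℤ-linear map determined by `ψ(L) = L̂`, `ψ(Eᵢ) = Êᵢ`. -/
def psi (x : Fin 6 → ℤ) : Fin 6 → ℤ := x 0 • Lhat + ∑ i : Fin 5, x i.succ • Ehat i

/-- `3L − (E₁+E₂+E₃) − 3E₄ − 3E₅`. -/
def v : Fin 6 → ℤ :=
  (3 : ℤ) • L - (E 0 + E 1 + E 2) - (3 : ℤ) • E 3 - (3 : ℤ) • E 4

/-- Coordinate expression of `psi`. -/
lemma psi_apply (x : Fin 6 → ℤ) :
    psi x = ![3 * x 0 + x 1 + x 2 + x 3 + 2 * x 4 + x 5,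
      -x 0 - x 3 - x 4, -x 0 - x 2 - x 4, -x 0 - x 1 - x 4, -x 0 - x 4 - x 5,
      -2 * x 0 - x 1 - x 2 - x 3 - x 4 - x 5] := by
  funext j
  fin_cases j <;> simp [psi, Lhat, Ehat, L, E, Fin.sum_univ_succ, Fin.ext_iff] <;> ring

lemma psi_add (x y : Fin 6 → ℤ) : psi (x + y) = psi x + psi y := by
  simp only [psi, Pi.add_apply, add_smul, Finset.sum_add_distrib]
  abel

/-- The inverse of `psi`, given by pairing with `Lhat` and `-Ehat i`. -/
def psiInv (y : Fin 6 → ℤ) : Fin 6 → ℤ :=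
  ![3 * y 0 + y 1 + y 2 + y 3 + y 4 + 2 * y 5,
    -y 0 - y 3 - y 5, -y 0 - y 2 - y 5, -y 0 - y 1 - y 5,
    -2 * y 0 - y 1 - y 2 - y 3 - y 4 - y 5, -y 0 - y 4 - y 5]

lemma psiInv_psi : Function.LeftInverse psiInv psi := by
  intro x
  funext j
  rw [psi_apply]
  fin_cases j <;> simp [psiInv] <;> ring

lemma psi_psiInv : Function.RightInverse psiInv psi := by
  intro y
  funext j
  rw [psi_apply]
  fin_cases j <;> simp [psiInv] <;> ring

lemma form_eq (x y : Fin 6 → ℤ) :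
    form x y = x 0 * y 0 - (x 1 * y 1 + x 2 * y 2 + x 3 * y 3 + x 4 * y 4 + x 5 * y 5) := by
  simp only [form, Fin.sum_univ_five]
  rfl

lemma form_psi_psi (x y : Fin 6 → ℤ) : form (psi x) (psi y) = form x y := by
  rw [form_eq, form_eq, psi_apply, psi_apply]
  simp
  ring

theorem psi_automorphism_X5 :
    psi L = Lhat ∧ (∀ i : Fin 5, psi (E i) = Ehat i) ∧
    (∀ x y : Fin 6 → ℤ, psi (x + y) = psi x + psi y) ∧
    Function.Bijective psi ∧
    (∀ x y : Fin 6 → ℤ, form (psi x) (psi y) = form x y) ∧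
    psi K = K ∧
    psi v = -v := by
  refine ⟨?_, ?_, psi_add, ⟨psiInv_psi.injective, psi_psiInv.surjective⟩, form_psi_psi, ?_, ?_⟩
  all_goals decide

end Stmt15
end
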